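/- arXiv:2603.26484 — 2 statements merged into one kernel-verified Lean document; each statement's English description precedes it below -/
import Mathlib

section
/- For every d.c.e. real γ the following are equivalent: (i) γ is strongly d.c.e. 0-speedable; (ii) γ is d.c.e. speedable; (iii) γ is weakly d.c.e. speedable; (iv) γ is covered by some Solovay test (i.e., γ is not Martin-Löf random). -/
open Filter

/-- A computable approximation of a real `α`: a computable sequence of
rationals in `[0,1]` converging to `α`. -/
def IsCompApprox (a : ℕ → ℚ) (α : ℝ) : Prop :=
  Computable a ∧ (∀ s, a s ∈ Set.Icc (0 : ℚ) 1) ∧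
    Tendsto (fun s => (a s : ℝ)) atTop (nhds α)

/-- A d.c.e. approximation: a computable approximation with bounded variation. -/
def IsDCEApprox (a : ℕ → ℚ) (α : ℝ) : Prop :=
  IsCompApprox a α ∧ Summable (fun s => |(a (s + 1) : ℝ) - (a s : ℝ)|)

/-- A computable order: a nondecreasing unbounded computable function. -/
def IsComputableOrder (f : ℕ → ℕ) : Prop :=
  Computable f ∧ Monotone f ∧ Tendsto f atTop atTop

/-- The liminf (in the extended reals) of `|(α - a (f s)) / (α - a s)|`. -/
noncomputable def speedLiminf (a : ℕ → ℚ) (f : ℕ → ℕ) (α : ℝ) : EReal :=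
  Filter.liminf (fun s => ((|(α - (a (f s) : ℝ)) / (α - (a s : ℝ))| : ℝ) : EReal)) atTop

/-- A computable approximation `a` of `α` is `ρ`-speedable. -/
def IsRhoSpeedable (a : ℕ → ℚ) (α : ℝ) (ρ : ℚ) : Prop :=
  (∃ q : ℚ, α = (q : ℝ)) ∨
    ∃ f, IsComputableOrder f ∧ speedLiminf a f α ≤ (((ρ : ℝ) : EReal))

/-- A computable approximation is speedable if it is `ρ`-speedable for some rational
`ρ ∈ [0,1)`. -/
def IsSpeedable (a : ℕ → ℚ) (α : ℝ) : Prop :=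
  ∃ ρ : ℚ, 0 ≤ ρ ∧ ρ < 1 ∧ IsRhoSpeedable a α ρ

/-- A Solovay test: computable sequences of rationals `l i ≤ r i` in `[0,1]`
with `Σ (r i - l i) < ∞`. -/
structure SolovayTest where
  l : ℕ → ℚ
  r : ℕ → ℚ
  comp_l : Computable l
  comp_r : Computable r
  mem_l : ∀ i, l i ∈ Set.Icc (0 : ℚ) 1
  mem_r : ∀ i, r i ∈ Set.Icc (0 : ℚ) 1
  le : ∀ i, l i ≤ r i
  summable : Summable (fun i => (r i : ℝ) - (l i : ℝ))

/-- A real `γ` is covered by a Solovay test if `γ ∈ [l i, r i]` for infinitely many `i`. -/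
def SolovayTest.Covers (T : SolovayTest) (γ : ℝ) : Prop :=
  ∃ᶠ i in atTop, γ ∈ Set.Icc (T.l i : ℝ) (T.r i : ℝ)

/-- The sequence of endpoints `l 0, r 0, l 1, r 1, …` of a Solovay test. -/
def SolovayTest.endpoints (T : SolovayTest) (n : ℕ) : ℚ :=
  if n % 2 = 0 then T.l (n / 2) else T.r (n / 2)

/-- A real is strongly d.c.e. 0-speedable: it has a d.c.e. approximation that is
0-speedable via the function `s ↦ s + 1`. -/
def StronglyDCEZeroSpeedable (γ : ℝ) : Prop :=
  ∃ c : ℕ → ℚ, IsDCEApprox c γ ∧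
    ((∃ q : ℚ, γ = (q : ℝ)) ∨ speedLiminf c (fun s => s + 1) γ ≤ (0 : EReal))

/-- A real is d.c.e. speedable: it has a speedable d.c.e. approximation. -/
def DCESpeedable (γ : ℝ) : Prop :=
  ∃ a : ℕ → ℚ, IsDCEApprox a γ ∧ IsSpeedable a γ

/-- A real is weakly d.c.e. speedable. -/
def WeaklyDCESpeedable (γ : ℝ) : Prop :=
  ∃ ρ : ℚ, 0 < ρ ∧ ρ < 1 ∧
    ∃ a b : ℕ → ℚ, IsDCEApprox a γ ∧ IsDCEApprox b γ ∧
      Filter.liminf (fun s => ((|(γ - (b s : ℝ)) / (γ - (a s : ℝ))| : ℝ) : EReal)) atTop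
        ≤ (((ρ : ℝ) : EReal))

/-!
If `|γ - b| ≤ σ |γ - a|` with `σ < 1`, then `γ` lies between the two points of the line through `b`
and `a` that divide the segment externally and internally in the ratio `σ`. For d.c.e.
approximations these points form sequences of bounded variation, and the intervals spanned by
consecutive terms of such a sequence form a test. So if no test covers `γ`, each of the two
sequences stays on one side of `γ`; then `γ` lies between them eventually, not just infinitely
often, and passing to a computable subsequence with summable distances gives a test covering `γ`.

Conversely, from a test covering `γ` one obtains dyadic cells with multiplicities such that the
weighted lengths are summable, while `γ` lies in cells of unbounded weight. When an approximation
of `γ` first enters a cell of weight `m`, let it jump to the point at `m` cell lengths below the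
cell and from there to the left endpoint. The total variation of these detours is bounded by the
weighted lengths, and at a cell containing `γ` the second jump divides the error by at least `m`.
-/

/-! ### Computable functions on the integers and the rationals -/

section ComputableTools

variable {α β : Type*} [Primcodable α]

theorem computablePred_comp [Primcodable β] {p : β → Prop} {f : α → β} (hp : ComputablePred p)
    (hf : Computable f) : ComputablePred fun a => p (f a) := by
  classical exact (hp.decide.comp hf).computablePred

theorem computablePred_and {p q : α → Prop} (hp : ComputablePred p) (hq : ComputablePred q) :
    ComputablePred fun a => p a ∧ q a := by
  classical
  exact Computable.computablePred ((Primrec.and.to_comp.comp hp.decide hq.decide).of_eq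
    fun _ => (Bool.decide_and _ _).symm)

theorem computablePred_or {p q : α → Prop} (hp : ComputablePred p) (hq : ComputablePred q) :
    ComputablePred fun a => p a ∨ q a := by
  classical
  exact Computable.computablePred ((Primrec.or.to_comp.comp hp.decide hq.decide).of_eq
    fun _ => (Bool.decide_or _ _).symm)

theorem computable_ite [Primcodable β] {p : α → Prop} [DecidablePred p] {f g : α → β}
    (hp : ComputablePred p) (hf : Computable f) (hg : Computable g) :
    Computable fun a => if p a then f a else g a := by
  simpa only [Bool.cond_decide] using hp.decide.cond hf hg

theorem computable_of_computablePred_graph [Denumerable β] {f : α → β}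
    (hf : ComputablePred fun p : α × β => f p.1 = p.2) : Computable f := by
  classical
  have hgraph : ComputablePred fun p : α × ℕ => f p.1 = Denumerable.ofNat β p.2 :=
    computablePred_comp hf (Computable.fst.pair ((Computable.ofNat β).comp Computable.snd))
  have hex : ∀ a, ∃ n, f a = Denumerable.ofNat β n :=
    fun a => ⟨Encodable.encode (f a), (Denumerable.ofNat_encode _).symm⟩
  exact ((Computable.ofNat β).comp (Computable.find hgraph hex)).of_eq
    fun a => (Nat.find_spec (hex a)).symm

theorem computable_two_pow : Computable fun n : ℕ => 2 ^ n :=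
  (Primrec₂.unpaired'.1 Nat.Primrec.pow).to_comp.comp (Computable.const 2) Computable.id

theorem computable_nat_count {p : α → ℕ → Prop} [DecidableRel p]
    (hp : ComputablePred fun x : α × ℕ => p x.1 x.2) {n : α → ℕ} (hn : Computable n) :
    Computable fun a => Nat.count (p a) (n a) := by
  have hstep : Computable₂ fun (a : α) (y : ℕ × ℕ) => y.2 + if p a y.1 then 1 else 0 :=
    Primrec.nat_add.to_comp.comp (Computable.snd.comp Computable.snd)
      (computable_ite (computablePred_comp hp
        (Computable.fst.pair (Computable.fst.comp Computable.snd)))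
        (Computable.const 1) (Computable.const 0))
  refine (Computable.nat_rec hn (Computable.const 0) hstep).of_eq fun a => ?_
  induction n a with
  | zero => rfl
  | succ k ih => rw [Nat.count_succ, ← ih]

theorem computablePred_forall_lt {p : α → ℕ → Prop} (hp : ComputablePred fun x : α × ℕ => p x.1 x.2)
    {n : α → ℕ} (hn : Computable n) : ComputablePred fun a => ∀ t < n a, p a t := by
  classical
  refine (computablePred_comp Primrec.eq.computablePred
    ((computable_nat_count (p := fun a t => ¬ p a t) hp.not hn).pair
      (Computable.const 0))).of_eq fun a => ?_
  simp only [Nat.count_iff_forall_not, not_not]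

end ComputableTools

section Denumeration

theorem computable_subtype_ofNat {s : Set ℕ} [DecidablePred (· ∈ s)] [Infinite s]
    (hs : ComputablePred (· ∈ s)) : Computable fun n => (Nat.Subtype.ofNat s n : ℕ) := by
  have hex (y : ℕ) : ∃ m, y + m + 1 ∈ s := by
    obtain ⟨z, hz, hyz⟩ := (Set.infinite_coe_iff.1 ‹Infinite s›).exists_gt y
    exact ⟨z - y - 1, by rwa [show y + (z - y - 1) + 1 = z by omega]⟩
  have hgap : Computable fun y => Nat.find (hex y) :=
    Computable.find (computablePred_comp hs
      (Primrec.succ.comp (Primrec.nat_add.comp Primrec.fst Primrec.snd)).to_comp) hex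
  have hnext : Computable₂ fun (_ : ℕ) (p : ℕ × ℕ) => p.2 + Nat.find (hex p.2) + 1 :=
    (Computable.succ.comp (Primrec.nat_add.to_comp.comp Computable.id hgap)).comp
      (Computable.snd.comp Computable.snd)
  refine (Computable.nat_rec Computable.id
    (Computable.const (Nat.Subtype.ofNat s 0 : ℕ)) hnext).of_eq fun n => ?_
  induction n with
  | zero => rfl
  | succ n ih =>
    dsimp only [id] at ih ⊢
    rw [ih]
    rfl

-- `Primcodable ℚ` is derived from `Denumerable.ofEncodableOfInfinite`: the code of `q` is the rank
-- of `⟨q.num, q.den⟩` among the codes of reduced fractions, so reading off `q.num` and `q.den`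
-- amounts to enumerating a decidable set.
theorem computable_encode_of_computablePred_range {α : Type*} [Encodable α] [Infinite α]
    (h : ComputablePred (· ∈ Set.range (Encodable.encode : α → ℕ))) :
    letI := Denumerable.ofEncodableOfInfinite α
    Computable (‹Encodable α›.encode) := by
  let := Encodable.decidableRangeEncode α
  have : Infinite (Set.range (Encodable.encode : α → ℕ)) :=
    Set.infinite_coe_iff.2 (Set.infinite_range_of_injective Encodable.encode_injective)
  let := Denumerable.ofEncodableOfInfinite α
  have hofNat (n : ℕ) : ‹Encodable α›.encode (Denumerable.ofNat α n) =
      Nat.Subtype.ofNat (Set.range (‹Encodable α›.encode)) n :=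
    congrArg Subtype.val ((Encodable.equivRangeEncode α).apply_symm_apply _)
  exact ((computable_subtype_ofNat h).comp Computable.encode).of_eq fun a => by
    rw [← hofNat, Denumerable.ofNat_encode]

end Denumeration

section IntArithmetic

theorem encode_int_ofNat (n : ℕ) : Encodable.encode (n : ℤ) = 2 * n := rfl

theorem encode_int_negSucc (n : ℕ) : Encodable.encode (Int.negSucc n) = 2 * n + 1 := rfl

theorem primrec_int_toNat : Primrec Int.toNat := by
  have hdecode : Primrec fun c : ℕ => if c % 2 = 0 then c / 2 else 0 :=
    Primrec.ite (Primrec.eq.comp (Primrec.nat_mod.comp Primrec.id (Primrec.const 2))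
      (Primrec.const 0)) (Primrec.nat_div.comp Primrec.id (Primrec.const 2)) (Primrec.const 0)
  refine (hdecode.comp Primrec.encode).of_eq fun z => ?_
  cases z with
  | ofNat n => simp [encode_int_ofNat]
  | negSucc n => simp [encode_int_negSucc]

theorem primrec_int_toNat_neg : Primrec fun z : ℤ => (-z).toNat := by
  have hdecode : Primrec fun c : ℕ => if c % 2 = 0 then 0 else (c + 1) / 2 :=
    Primrec.ite (Primrec.eq.comp (Primrec.nat_mod.comp Primrec.id (Primrec.const 2))
      (Primrec.const 0)) (Primrec.const 0) (Primrec.nat_div.comp Primrec.succ (Primrec.const 2))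
  refine (hdecode.comp Primrec.encode).of_eq fun z => ?_
  cases z with
  | ofNat n => simp [encode_int_ofNat]
  | negSucc n => simp [encode_int_negSucc]; omega

theorem primrec_int_subNatNat : Primrec₂ Int.subNatNat := by
  have hcode : Primrec₂ fun m n : ℕ => if n ≤ m then 2 * (m - n) else 2 * (n - m) - 1 := by
    have hsub := Primrec.nat_sub
    have hdouble := Primrec.nat_mul.comp (Primrec.const 2) (hsub.comp .fst .snd)
    have hdouble' := Primrec.nat_mul.comp (Primrec.const 2) (hsub.comp .snd .fst)
    exact Primrec.ite (Primrec.nat_le.comp .snd .fst) hdouble (hsub.comp hdouble' (.const 1))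
  refine Primrec₂.encode_iff.1 (hcode.of_eq fun m n => ?_)
  split_ifs with h
  · rw [Int.subNatNat_of_le h]; rfl
  · rw [Int.subNatNat_of_lt (not_le.1 h), encode_int_negSucc, Nat.pred_eq_sub_one]; omega

variable {α : Type*} [Primcodable α] {f g : α → ℤ}

theorem computable_int_natCast {f : α → ℕ} (hf : Computable f) : Computable fun a => (f a : ℤ) :=
  (primrec_int_subNatNat.to_comp.comp hf (Computable.const 0)).of_eq fun a => by
    rw [Int.subNatNat_eq_coe, Nat.cast_zero, sub_zero]

theorem computable_int_add (hf : Computable f) (hg : Computable g) :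
    Computable fun a => f a + g a := by
  have hadd := Primrec.nat_add.to_comp
  have hpos := hadd.comp (primrec_int_toNat.to_comp.comp hf) (primrec_int_toNat.to_comp.comp hg)
  have hneg := hadd.comp (primrec_int_toNat_neg.to_comp.comp hf)
    (primrec_int_toNat_neg.to_comp.comp hg)
  refine (primrec_int_subNatNat.to_comp.comp hpos hneg).of_eq fun a => ?_
  rw [Int.subNatNat_eq_coe]
  omega

theorem computable_int_mul (hf : Computable f) (hg : Computable g) :
    Computable fun a => f a * g a := by
  have hadd := Primrec.nat_add.to_comp
  have hmul := Primrec.nat_mul.to_comp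
  have hf₁ := primrec_int_toNat.to_comp.comp hf
  have hf₂ := primrec_int_toNat_neg.to_comp.comp hf
  have hg₁ := primrec_int_toNat.to_comp.comp hg
  have hg₂ := primrec_int_toNat_neg.to_comp.comp hg
  have hpos := hadd.comp (hmul.comp hf₁ hg₁) (hmul.comp hf₂ hg₂)
  have hneg := hadd.comp (hmul.comp hf₁ hg₂) (hmul.comp hf₂ hg₁)
  refine (primrec_int_subNatNat.to_comp.comp hpos hneg).of_eq fun a => ?_
  rw [Int.subNatNat_eq_coe]
  push_cast
  linear_combination ((f a).toNat - (-f a).toNat : ℤ) * Int.toNat_sub_toNat_neg (g a) +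
    g a * Int.toNat_sub_toNat_neg (f a)

theorem computablePred_int_le (hf : Computable f) (hg : Computable g) :
    ComputablePred fun a => f a ≤ g a := by
  have hadd := Primrec.nat_add.to_comp
  have hl := hadd.comp (primrec_int_toNat.to_comp.comp hf) (primrec_int_toNat_neg.to_comp.comp hg)
  have hr := hadd.comp (primrec_int_toNat.to_comp.comp hg) (primrec_int_toNat_neg.to_comp.comp hf)
  refine (computablePred_comp Primrec.nat_le.computablePred (hl.pair hr)).of_eq fun a => ?_
  dsimp only
  omega

end IntArithmetic

section RatArithmetic

theorem primrecRel_nat_coprime : PrimrecRel Nat.Coprime := by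
  have hmod {i : ℕ × ℕ × ℕ → ℕ} (hi : Primrec i) :
      PrimrecPred fun x : ℕ × ℕ × ℕ => i x % x.1 = 0 :=
    Primrec.eq.comp (Primrec.nat_mod.comp hi .fst) (.const 0)
  have hnot : PrimrecRel fun (k : ℕ) (p : ℕ × ℕ) => ¬ (p.1 % k = 0 ∧ p.2 % k = 0 ∧ k ≠ 1) :=
    ((hmod (Primrec.fst.comp .snd)).and ((hmod (Primrec.snd.comp .snd)).and
      (Primrec.eq.comp .fst (.const 1)).not)).not
  refine (hnot.forall_mem_list.comp (Primrec.list_range.comp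
    (Primrec.succ.comp Primrec.nat_add)) Primrec.id).of_eq fun ⟨m, n⟩ => ?_
  simp only [List.mem_range, id, ← Nat.dvd_iff_mod_eq_zero, Nat.succ_eq_add_one]
  constructor
  · intro h
    by_contra hgcd
    refine h (m.gcd n) (Nat.lt_succ_of_le ?_) ⟨Nat.gcd_dvd_left m n, Nat.gcd_dvd_right m n, hgcd⟩
    rcases m.eq_zero_or_pos with rfl | hm
    · simp
    · exact (Nat.gcd_le_left n hm).trans (Nat.le_add_right m n)
  · rintro h k - ⟨hm, hn, hk⟩
    exact hk (Nat.eq_one_of_dvd_coprimes h hm hn)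

theorem rat_encode_eq (q : ℚ) :
    Rat.instEncodable.encode q = Nat.pair (Encodable.encode q.num) q.den := rfl

theorem mem_range_rat_encode {c : ℕ} : c ∈ Set.range Rat.instEncodable.encode ↔
    0 < c.unpair.2 ∧ (Denumerable.ofNat ℤ c.unpair.1).natAbs.Coprime c.unpair.2 := by
  constructor
  · rintro ⟨q, rfl⟩
    rw [rat_encode_eq]
    simpa only [Nat.unpair_pair, Denumerable.ofNat_encode] using ⟨q.den_pos, q.reduced⟩
  · rintro ⟨hpos, hcop⟩
    refine ⟨⟨Denumerable.ofNat ℤ c.unpair.1, c.unpair.2, hpos.ne', hcop⟩, ?_⟩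
    rw [rat_encode_eq, Denumerable.encode_ofNat, Nat.pair_unpair]

theorem computable_rat_encode : Computable Rat.instEncodable.encode := by
  refine computable_encode_of_computablePred_range (ComputablePred.of_eq ?_
    fun _ => mem_range_rat_encode.symm)
  have hnatAbs : Primrec Int.natAbs :=
    (Primrec.nat_add.comp primrec_int_toNat primrec_int_toNat_neg).of_eq fun z => by omega
  have hfst := Primrec.fst.comp Primrec.unpair
  have hsnd := Primrec.snd.comp Primrec.unpair
  exact ((Primrec.nat_lt.comp (.const 0) hsnd).and (primrecRel_nat_coprime.comp
    (hnatAbs.comp ((Primrec.ofNat ℤ).comp hfst)) hsnd)).computablePred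

theorem computable_rat_den : Computable Rat.den :=
  ((Computable.snd.comp Computable.unpair).comp computable_rat_encode).of_eq fun q => by
    rw [rat_encode_eq, Nat.unpair_pair]

theorem computable_rat_num : Computable Rat.num :=
  ((Computable.ofNat ℤ).comp
    ((Computable.fst.comp Computable.unpair).comp computable_rat_encode)).of_eq fun q => by
    rw [rat_encode_eq, Nat.unpair_pair, Denumerable.ofNat_encode]

theorem computable₂_mkRat : Computable₂ mkRat := by
  have hq : Computable fun x : (ℤ × ℕ) × ℚ => x.2.num := computable_rat_num.comp Computable.snd
  have hn : Computable fun x : (ℤ × ℕ) × ℚ => x.1.1 := Computable.fst.comp Computable.fst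
  have hd : Computable fun x : (ℤ × ℕ) × ℚ => x.1.2 := Computable.snd.comp Computable.fst
  have hzero : ComputablePred fun x : (ℤ × ℕ) × ℚ => x.1.2 = 0 :=
    computablePred_comp Primrec.eq.computablePred (hd.pair (Computable.const 0))
  have hcross := computablePred_comp Primrec.eq.computablePred
    ((computable_int_mul hn (computable_int_natCast (computable_rat_den.comp Computable.snd))).pair
      (computable_int_mul hq (computable_int_natCast hd)))
  have hqzero : ComputablePred fun x : (ℤ × ℕ) × ℚ => x.2.num = 0 :=
    computablePred_comp Primrec.eq.computablePred (hq.pair (Computable.const 0))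
  refine computable_of_computablePred_graph ((computablePred_or
    (computablePred_and hzero hqzero) (computablePred_and hzero.not hcross)).of_eq ?_)
  rintro ⟨⟨n, d⟩, q⟩
  dsimp only
  rcases eq_or_ne d 0 with rfl | hd
  · simp [eq_comm]
  · have hiff : mkRat n d = q ↔ n * q.den = q.num * d := by
      conv_lhs => rw [← Rat.mkRat_self q, Rat.mkRat_eq_iff hd q.den_nz]
    simp [hd, hiff]

variable {α : Type*} [Primcodable α] {f g : α → ℚ}

theorem computable_rat_add (hf : Computable f) (hg : Computable g) :
    Computable fun a => f a + g a := by
  have hdf := computable_rat_den.comp hf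
  have hdg := computable_rat_den.comp hg
  have hnum := computable_int_add
    (computable_int_mul (computable_rat_num.comp hf) (computable_int_natCast hdg))
    (computable_int_mul (computable_rat_num.comp hg) (computable_int_natCast hdf))
  exact (computable₂_mkRat.comp hnum (Primrec.nat_mul.to_comp.comp hdf hdg)).of_eq
    fun a => (Rat.add_def' _ _).symm

theorem computable_rat_mul (hf : Computable f) (hg : Computable g) :
    Computable fun a => f a * g a :=
  (computable₂_mkRat.comp
    (computable_int_mul (computable_rat_num.comp hf) (computable_rat_num.comp hg))
    (Primrec.nat_mul.to_comp.comp (computable_rat_den.comp hf) (computable_rat_den.comp hg))).of_eq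
    fun _ => (Rat.mul_def' _ _).symm

theorem computable_rat_sub (hf : Computable f) (hg : Computable g) :
    Computable fun a => f a - g a :=
  (computable_rat_add hf (computable_rat_mul (Computable.const (-1)) hg)).of_eq fun a => by ring

theorem computable_rat_natCast {n : α → ℕ} (hn : Computable n) : Computable fun a => (n a : ℚ) :=
  (computable₂_mkRat.comp (computable_int_natCast hn) (Computable.const 1)).of_eq fun a => by
    rw [Rat.mkRat_one, Int.cast_natCast]

theorem computable_rat_pow (q : ℚ) {n : α → ℕ} (hn : Computable n) :
    Computable fun a => q ^ n a := by
  have hstep : Computable₂ fun (_ : α) (y : ℕ × ℚ) => y.2 * q :=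
    computable_rat_mul (Computable.snd.comp Computable.snd) (Computable.const q)
  refine (Computable.nat_rec hn (Computable.const 1) hstep).of_eq fun a => ?_
  induction n a with
  | zero => exact (pow_zero q).symm
  | succ k ih => rw [pow_succ, ← ih]

theorem computablePred_rat_le (hf : Computable f) (hg : Computable g) :
    ComputablePred fun a => f a ≤ g a := by
  have hcross {f g : α → ℚ} (hf : Computable f) (hg : Computable g) :=
    computable_int_mul (computable_rat_num.comp hf)
      (computable_int_natCast (computable_rat_den.comp hg))
  exact (computablePred_int_le (hcross hf hg) (hcross hg hf)).of_eq fun a => (Rat.le_iff _ _).symm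

theorem computable_rat_max (hf : Computable f) (hg : Computable g) :
    Computable fun a => max (f a) (g a) :=
  (computable_ite (computablePred_rat_le hf hg) hg hf).of_eq fun _ => (max_def _ _).symm

theorem computable_rat_min (hf : Computable f) (hg : Computable g) :
    Computable fun a => min (f a) (g a) :=
  (computable_ite (computablePred_rat_le hf hg) hf hg).of_eq fun _ => (min_def _ _).symm

theorem computable_rat_abs (hf : Computable f) : Computable fun a => |f a| :=
  (computable_rat_max hf (computable_rat_mul (Computable.const (-1)) hf)).of_eq fun _ => by
    rw [neg_one_mul, abs_eq_max_neg]

end RatArithmetic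

/-! ### Weak speedability implies coverage -/

section Approximations

theorem summable_abs_sub_comp_of_monotone {x : ℕ → ℝ} (hx : Summable fun s => |x (s + 1) - x s|)
    {f : ℕ → ℕ} (hf : Monotone f) : Summable fun s => |x (f (s + 1)) - x (f s)| := by
  refine summable_of_sum_range_le (c := ∑' s, |x (s + 1) - x s|) (fun _ => abs_nonneg _) fun n => ?_
  have hblocks : ∑ i ∈ Finset.range n, |x (f (i + 1)) - x (f i)| ≤
      ∑ i ∈ Finset.Ico (f 0) (f n), |x (i + 1) - x i| := by
    induction n with
    | zero => simp
    | succ n ih =>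
      rw [Finset.sum_range_succ,
        ← Finset.sum_Ico_consecutive _ (hf (Nat.zero_le n)) (hf n.le_succ)]
      refine add_le_add ih ?_
      calc |x (f (n + 1)) - x (f n)| = dist (x (f n)) (x (f (n + 1))) := by
            rw [dist_comm, Real.dist_eq]
        _ ≤ ∑ i ∈ Finset.Ico (f n) (f (n + 1)), dist (x i) (x (i + 1)) :=
          dist_le_Ico_sum_dist x (hf n.le_succ)
        _ = ∑ i ∈ Finset.Ico (f n) (f (n + 1)), |x (i + 1) - x i| :=
          Finset.sum_congr rfl fun i _ => by rw [dist_comm, Real.dist_eq]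
  exact hblocks.trans (hx.sum_le_tsum _ fun _ _ => abs_nonneg _)

variable {a b : ℕ → ℚ} {γ : ℝ}

theorem IsCompApprox.mem_Icc (ha : IsCompApprox a γ) : γ ∈ Set.Icc (0 : ℝ) 1 :=
  isClosed_Icc.mem_of_tendsto ha.2.2 <| .of_forall fun s =>
    ⟨by exact_mod_cast (ha.2.1 s).1, by exact_mod_cast (ha.2.1 s).2⟩

theorem IsDCEApprox.comp (ha : IsDCEApprox a γ) {f : ℕ → ℕ} (hf : IsComputableOrder f) :
    IsDCEApprox (fun s => a (f s)) γ :=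
  ⟨⟨ha.1.1.comp hf.1, fun s => ha.1.2.1 (f s), ha.1.2.2.comp hf.2.2⟩,
    summable_abs_sub_comp_of_monotone (x := fun s => (a s : ℝ)) ha.2 hf.2.1⟩

theorem IsDCEApprox.of_summable_abs_sub (ha : IsDCEApprox a γ) (hb : Computable b)
    (hb01 : ∀ s, b s ∈ Set.Icc (0 : ℚ) 1) (hab : Summable fun s => |(b s : ℝ) - a s|) :
    IsDCEApprox b γ := by
  have hlim : Tendsto (fun s => (b s : ℝ)) atTop (nhds γ) := by
    simpa using ha.1.2.2.add (summable_abs_iff.1 hab).tendsto_atTop_zero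
  refine ⟨⟨hb, hb01, hlim⟩, .of_nonneg_of_le (fun _ => abs_nonneg _) (fun s => ?_)
    (((summable_nat_add_iff 1).2 hab).add (ha.2.add hab))⟩
  calc |(b (s + 1) : ℝ) - b s|
      = |((b (s + 1) : ℝ) - a (s + 1)) + ((a (s + 1) - a s) - (b s - a s))| := by
        congr 1; ring
    _ ≤ |(b (s + 1) : ℝ) - a (s + 1)| + (|(a (s + 1) : ℝ) - a s| + |(b s : ℝ) - a s|) :=
      (abs_add_le _ _).trans (add_le_add_right (abs_sub _ _) _)

theorem StronglyDCEZeroSpeedable.dceSpeedable (h : StronglyDCEZeroSpeedable γ) :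
    DCESpeedable γ := by
  obtain ⟨c, hc, hspeed⟩ := h
  have hsucc : IsComputableOrder fun s => s + 1 :=
    ⟨Computable.succ, fun _ _ => Nat.succ_le_succ, tendsto_add_atTop_nat 1⟩
  exact ⟨c, hc, 0, le_rfl, one_pos, hspeed.imp_right fun h => ⟨_, hsucc, by simpa using h⟩⟩

theorem DCESpeedable.weaklyDCESpeedable (h : DCESpeedable γ) : WeaklyDCESpeedable γ := by
  obtain ⟨a, ha, ρ, hρ0, hρ1, ⟨q, rfl⟩ | ⟨f, hf, hspeed⟩⟩ := h
  · have hq : q ∈ Set.Icc (0 : ℚ) 1 :=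
      ⟨by exact_mod_cast ha.1.mem_Icc.1, by exact_mod_cast ha.1.mem_Icc.2⟩
    have hconst : IsDCEApprox (fun _ => q) q :=
      ⟨⟨Computable.const q, fun _ => hq, tendsto_const_nhds⟩, by simp [summable_zero]⟩
    exact ⟨1 / 2, by norm_num, by norm_num, a, fun _ => q, ha, hconst, by
      simp only [sub_self, zero_div, abs_zero, EReal.coe_zero, liminf_const]
      exact_mod_cast (by norm_num : (0 : ℝ) ≤ (1 / 2 : ℚ))⟩
  · refine ⟨(ρ + 1) / 2, by linarith, by linarith, a, fun s => a (f s), ha, ha.comp hf,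
      hspeed.trans ?_⟩
    exact_mod_cast (by linarith : ρ ≤ (ρ + 1) / 2)

end Approximations

section Tests

variable {γ : ℝ}

theorem exists_covers_of_frequently_mem_uIcc {x y : ℕ → ℚ} (hγ : γ ∈ Set.Icc (0 : ℝ) 1)
    (hx : Computable x) (hy : Computable y) (hxy : Summable fun i => |(x i : ℝ) - y i|)
    (hmem : ∃ᶠ i in atTop, γ ∈ Set.uIcc (x i : ℝ) (y i)) : ∃ T : SolovayTest, T.Covers γ := by
  let clamp (q : ℚ) : ℚ := max 0 (min 1 q)
  have hclamp {w : ℕ → ℚ} (hw : Computable w) : Computable fun i => clamp (w i) :=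
    computable_rat_max (Computable.const 0) (computable_rat_min (Computable.const 1) hw)
  have hclamp_mem (q : ℚ) : clamp q ∈ Set.Icc (0 : ℚ) 1 :=
    ⟨le_max_left _ _, max_le zero_le_one (min_le_left _ _)⟩
  have hclamp_mono : Monotone clamp := fun p q h => max_le_max_left 0 (min_le_min_left 1 h)
  have hle (i : ℕ) : clamp (min (x i) (y i)) ≤ clamp (max (x i) (y i)) :=
    hclamp_mono min_le_max
  have hlength (i : ℕ) : clamp (max (x i) (y i)) - clamp (min (x i) (y i)) ≤ |x i - y i| := by
    simp only [clamp]
    grind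
  refine ⟨⟨_, _, hclamp (computable_rat_min hx hy), hclamp (computable_rat_max hx hy),
    fun _ => hclamp_mem _, fun _ => hclamp_mem _, hle,
    .of_nonneg_of_le (fun i => ?_) (fun i => ?_) hxy⟩, hmem.mono fun i hi => ?_⟩
  · exact sub_nonneg.2 (by exact_mod_cast hle i)
  · exact_mod_cast hlength i
  · rw [Set.uIcc, Set.mem_Icc] at hi
    simp only [clamp, Set.mem_Icc, Rat.cast_max, Rat.cast_min, Rat.cast_zero, Rat.cast_one]
    exact ⟨max_le hγ.1 ((min_le_right _ _).trans hi.1), le_max_of_le_right (le_min hγ.2 hi.2)⟩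

theorem exists_covers_ratCast {q : ℚ} (hq : (q : ℝ) ∈ Set.Icc (0 : ℝ) 1) :
    ∃ T : SolovayTest, T.Covers q :=
  exists_covers_of_frequently_mem_uIcc hq (Computable.const q) (Computable.const q)
    (by simp [summable_zero]) (.of_forall fun _ => Set.left_mem_uIcc)

theorem exists_computable_abs_comp_le {z : ℕ → ℚ} (hz : Computable z)
    (hlim : Tendsto (fun s => (z s : ℝ)) atTop (nhds 0)) :
    ∃ S : ℕ → ℕ, Computable S ∧ (∀ n, n ≤ S n) ∧ ∀ n, |z (S n)| ≤ (1 / 2) ^ n := by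
  have hex (n : ℕ) : ∃ m, |z (n + m)| ≤ (1 / 2) ^ n := by
    have hsmall := hlim.abs.eventually_le_const (u := (1 / 2 : ℝ) ^ n) (by simp)
    obtain ⟨m, hm, hnm⟩ := (hsmall.and (eventually_ge_atTop n)).exists
    refine ⟨m - n, ?_⟩
    rw [Nat.add_sub_cancel' hnm, ← Rat.cast_le (K := ℝ)]
    push_cast
    exact hm
  have hadd := Primrec.nat_add.to_comp
  have hfind : Computable fun n => Nat.find (hex n) :=
    Computable.find (computablePred_rat_le
      (computable_rat_abs (hz.comp (hadd.comp Computable.fst Computable.snd)))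
      (computable_rat_pow _ Computable.fst)) hex
  exact ⟨fun n => n + Nat.find (hex n), hadd.comp Computable.id hfind,
    fun n => Nat.le_add_right _ _, fun n => Nat.find_spec (hex n)⟩

theorem exists_covers_of_eventually_mem_uIcc {x y : ℕ → ℚ} (hγ : γ ∈ Set.Icc (0 : ℝ) 1)
    (hx : Computable x) (hy : Computable y)
    (hxy : Tendsto (fun i => (x i : ℝ) - y i) atTop (nhds 0))
    (hmem : ∀ᶠ i in atTop, γ ∈ Set.uIcc (x i : ℝ) (y i)) : ∃ T : SolovayTest, T.Covers γ := by
  obtain ⟨S, hS, hSn, hSle⟩ := exists_computable_abs_comp_le (computable_rat_sub hx hy)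
    (by simpa only [Rat.cast_sub] using hxy)
  refine exists_covers_of_frequently_mem_uIcc hγ (hx.comp hS) (hy.comp hS)
    (.of_nonneg_of_le (fun _ => abs_nonneg _) (fun n => ?_) summable_geometric_two)
    ((tendsto_atTop_mono hSn tendsto_id).eventually hmem).frequently
  simpa using (Rat.cast_le (K := ℝ)).2 (hSle n)

theorem eventually_lt_or_eventually_gt_of_forall_not_covers (hγ : γ ∈ Set.Icc (0 : ℝ) 1)
    (hT : ∀ T : SolovayTest, ¬ T.Covers γ) {w : ℕ → ℚ} (hw : Computable w)
    (hvar : Summable fun s => |(w (s + 1) : ℝ) - w s|) :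
    (∀ᶠ s in atTop, (w s : ℝ) < γ) ∨ ∀ᶠ s in atTop, γ < w s := by
  have hcross : ∀ᶠ s in atTop, γ ∉ Set.uIcc (w (s + 1) : ℝ) (w s) := by
    by_contra hfreq
    obtain ⟨T, hγT⟩ := exists_covers_of_frequently_mem_uIcc hγ (hw.comp Computable.succ) hw hvar
      hfreq
    exact hT T hγT
  obtain ⟨N, hN⟩ := eventually_atTop.1 hcross
  simp only [Set.mem_uIcc, not_or, not_and, not_le] at hN
  rcases le_or_gt (w N : ℝ) γ with h | h
  · refine .inl (eventually_atTop.2 ⟨N + 1, fun s hs => ?_⟩)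
    induction s, hs using Nat.le_induction with
    | base => exact lt_of_not_ge fun h' => ((hN N le_rfl).2 h).not_ge h'
    | succ s hs ih => exact lt_of_not_ge fun h' => ((hN s (by omega)).2 ih.le).not_ge h'
  · refine .inr (eventually_atTop.2 ⟨N, fun s hs => ?_⟩)
    induction s, hs using Nat.le_induction with
    | base => exact h
    | succ s hs ih => exact lt_of_not_ge fun h' => ((hN s hs).1 h').not_ge ih.le

end Tests

section WeakSpeedability

/-- The point at parameter `t` on the line through `b` (at `0`) and `a` (at `1`), as a rational
sequence: `AffineMap.lineMap` applied termwise. -/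
def ratLineMap (b a : ℕ → ℚ) (t : ℚ) (s : ℕ) : ℚ :=
  AffineMap.lineMap (b s) (a s) t

theorem ratLineMap_cast (b a : ℕ → ℚ) (t : ℚ) (s : ℕ) :
    (ratLineMap b a t s : ℝ) = (1 - t) * b s + t * a s := by
  simp [ratLineMap, AffineMap.lineMap_apply_ring]

variable {a b : ℕ → ℚ} {γ : ℝ}

theorem computable_ratLineMap (hb : Computable b) (ha : Computable a) (t : ℚ) :
    Computable (ratLineMap b a t) :=
  (computable_rat_add (computable_rat_mul (Computable.const (1 - t)) hb)
    (computable_rat_mul (Computable.const t) ha)).of_eq fun _ =>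
      (AffineMap.lineMap_apply_ring _ _ _).symm

theorem IsDCEApprox.summable_abs_sub_ratLineMap (hb : IsDCEApprox b γ) (ha : IsDCEApprox a γ)
    (t : ℚ) : Summable fun s => |(ratLineMap b a t (s + 1) : ℝ) - ratLineMap b a t s| := by
  refine .of_nonneg_of_le (fun _ => abs_nonneg _) (fun s => ?_)
    ((hb.2.mul_left |1 - (t : ℝ)|).add (ha.2.mul_left |(t : ℝ)|))
  rw [← abs_mul, ← abs_mul, ratLineMap_cast, ratLineMap_cast]
  exact (congrArg abs (by ring)).trans_le (abs_add_le _ _)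

theorem IsCompApprox.tendsto_ratLineMap (hb : IsCompApprox b γ) (ha : IsCompApprox a γ) (t : ℚ) :
    Tendsto (fun s => (ratLineMap b a t s : ℝ)) atTop (nhds γ) := by
  simp only [ratLineMap_cast]
  convert (hb.2.2.const_mul (1 - (t : ℝ))).add (ha.2.2.const_mul (t : ℝ)) using 2
  ring

-- `{x | |x - b| ≤ σ |x - a|}` is the ball of Apollonius; in dimension one its two boundary points
-- divide the segment from `b` to `a` in the ratio `σ`, externally and internally.
theorem mem_uIcc_of_abs_sub_le_mul_abs_sub {x b a σ : ℝ} (hσ0 : 0 ≤ σ) (hσ1 : σ < 1)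
    (h : |x - b| ≤ σ * |x - a|) :
    x ∈ Set.uIcc ((1 - -(σ / (1 - σ))) * b + -(σ / (1 - σ)) * a)
      ((1 - σ / (1 + σ)) * b + σ / (1 + σ) * a) := by
  have hpos : 0 < 1 - σ := sub_pos.2 hσ1
  have hext : (1 - -(σ / (1 - σ))) * b + -(σ / (1 - σ)) * a = (b - σ * a) / (1 - σ) := by
    field_simp; ring
  have hint : (1 - σ / (1 + σ)) * b + σ / (1 + σ) * a = (b + σ * a) / (1 + σ) := by
    field_simp; ring
  rw [hext, hint, Set.mem_uIcc, div_le_iff₀ hpos, le_div_iff₀ (by positivity),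
    div_le_iff₀ (by positivity), le_div_iff₀ hpos]
  obtain ⟨h₁, h₂⟩ := abs_le.1 h
  rcases le_total a x with hax | hax
  · rw [abs_of_nonneg (sub_nonneg.2 hax)] at h₁ h₂
    right; constructor <;> linarith
  · rw [abs_of_nonpos (sub_nonpos.2 hax)] at h₁ h₂
    left; constructor <;> linarith

theorem WeaklyDCESpeedable.exists_ratLineMap (h : WeaklyDCESpeedable γ)
    (hirr : Irrational γ) :
    ∃ b a : ℕ → ℚ, IsDCEApprox b γ ∧ IsDCEApprox a γ ∧ ∃ t u : ℚ,
      ∃ᶠ s in atTop, γ ∈ Set.uIcc (ratLineMap b a t s : ℝ) (ratLineMap b a u s) := by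
  obtain ⟨ρ, hρ0, hρ1, a, b, ha, hb, hlim⟩ := h
  let σ : ℚ := (ρ + 1) / 2
  have hσ0 : (0 : ℝ) ≤ σ := by exact_mod_cast (by dsimp only [σ]; linarith : (0 : ℚ) ≤ σ)
  have hσ1 : (σ : ℝ) < 1 := by exact_mod_cast (by dsimp only [σ]; linarith : σ < 1)
  have hρσ : ((ρ : ℝ) : EReal) < ((σ : ℝ) : EReal) := by
    exact_mod_cast (by dsimp only [σ]; linarith : ρ < σ)
  refine ⟨b, a, hb, ha, -(σ / (1 - σ)), σ / (1 + σ),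
    (frequently_lt_of_liminf_lt (by isBoundedDefault) (hlim.trans_lt hρσ)).mono fun s hs => ?_⟩
  have hpos : 0 < |γ - a s| := abs_pos.2 (sub_ne_zero.2 (hirr.ne_rat (a s)))
  rw [EReal.coe_lt_coe_iff, abs_div, div_lt_iff₀ hpos] at hs
  rw [ratLineMap_cast, ratLineMap_cast]
  push_cast
  exact mem_uIcc_of_abs_sub_le_mul_abs_sub hσ0 hσ1 hs.le

theorem WeaklyDCESpeedable.exists_covers (h : WeaklyDCESpeedable γ) :
    ∃ T : SolovayTest, T.Covers γ := by
  have hγ : γ ∈ Set.Icc (0 : ℝ) 1 := by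
    obtain ⟨-, -, -, a, -, ha, -⟩ := h
    exact ha.1.mem_Icc
  by_contra! hT
  have hirr : Irrational γ := by
    rintro ⟨q, rfl⟩
    obtain ⟨T, hqT⟩ := exists_covers_ratCast hγ
    exact hT T hqT
  obtain ⟨b, a, hb, ha, t, u, hfreq⟩ := h.exists_ratLineMap hirr
  have hcomp := computable_ratLineMap hb.1.1 ha.1.1
  have hside (t : ℚ) := eventually_lt_or_eventually_gt_of_forall_not_covers hγ hT (hcomp t)
    (hb.summable_abs_sub_ratLineMap ha t)
  have hmem : ∀ᶠ s in atTop, γ ∈ Set.uIcc (ratLineMap b a t s : ℝ) (ratLineMap b a u s) := by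
    rcases hside t with ht | ht <;> rcases hside u with hu | hu
    · obtain ⟨s, hs, hts, hus⟩ := (hfreq.and_eventually (ht.and hu)).exists
      exact absurd hs (Set.notMem_uIcc_of_gt hts hus)
    · filter_upwards [ht, hu] with s hts hus using Set.mem_uIcc.2 (.inl ⟨hts.le, hus.le⟩)
    · filter_upwards [ht, hu] with s hts hus using Set.mem_uIcc.2 (.inr ⟨hus.le, hts.le⟩)
    · obtain ⟨s, hs, hts, hus⟩ := (hfreq.and_eventually (ht.and hu)).exists
      exact absurd hs (Set.notMem_uIcc_of_lt hts hus)
  have hlim := (hb.1.tendsto_ratLineMap ha.1 t).sub (hb.1.tendsto_ratLineMap ha.1 u)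
  obtain ⟨T, hγT⟩ := exists_covers_of_eventually_mem_uIcc hγ (hcomp t) (hcomp u)
    (by simpa only [sub_self] using hlim) hmem
  exact hT T hγT

end WeakSpeedability

/-! ### Weighting the cells of a test -/

section DyadicAverages

theorem sum_range_mul_div {M : Type*} [AddCommMonoid M] (m n : ℕ) (hm : 0 < m) (f : ℕ → M) :
    ∑ x ∈ Finset.range (m * n), f (x / m) = m • ∑ k ∈ Finset.range n, f k := by
  induction n with
  | zero => simp
  | succ n ih =>
    rw [Nat.mul_succ, Finset.sum_range_add, ih, Finset.sum_range_succ, nsmul_add]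
    congr 1
    rw [← Finset.card_range m, ← Finset.sum_const, Finset.card_range]
    refine Finset.sum_congr rfl fun x hx => ?_
    rw [Nat.mul_add_div hm, Nat.div_eq_of_lt (Finset.mem_range.1 hx), add_zero]

theorem sum_dyadic_averages (f : ℕ → ℕ → ℝ) (I : ℕ) :
    ∑ i ∈ Finset.range I, (∑ k ∈ Finset.range (2 ^ i), f i k) / 2 ^ i =
      (∑ t ∈ Finset.range (2 ^ I), ∑ i ∈ Finset.range I, f i (t / 2 ^ (I - i))) / 2 ^ I := by
  rw [Finset.sum_comm, Finset.sum_div]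
  refine Finset.sum_congr rfl fun i hi => ?_
  have hpow : 2 ^ I = 2 ^ (I - i) * 2 ^ i := by
    rw [← pow_add, Nat.sub_add_cancel (Finset.mem_range.1 hi).le]
  rw [hpow, sum_range_mul_div _ _ (by positivity), nsmul_eq_mul, ← Nat.cast_ofNat (R := ℝ),
    ← Nat.cast_pow 2 I, hpow]
  push_cast
  field_simp

theorem card_filter_natCast_mem_Icc_le (s : Finset ℕ) {x y : ℝ} (hxy : x ≤ y + 1) :
    ((s.filter fun k : ℕ => (k : ℝ) ∈ Set.Icc x y).card : ℝ) ≤ y - x + 1 := by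
  have hcard : (s.filter fun k : ℕ => (k : ℝ) ∈ Set.Icc x y).card ≤
      (⌊y⌋ + 1 - ⌈x⌉).toNat := by
    rw [← Int.card_Icc]
    refine Finset.card_le_card_of_injOn (fun k => (k : ℤ)) (fun k hk => ?_) Nat.cast_injective.injOn
    obtain ⟨hx, hy⟩ := (Finset.mem_filter.1 hk).2
    exact Finset.mem_Icc.2
      ⟨Int.ceil_le.2 (by exact_mod_cast hx), Int.le_floor.2 (by exact_mod_cast hy)⟩
  calc ((s.filter fun k : ℕ => (k : ℝ) ∈ Set.Icc x y).card : ℝ)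
      ≤ (((⌊y⌋ + 1 - ⌈x⌉).toNat : ℤ) : ℝ) := by exact_mod_cast hcard
    _ = max ((⌊y⌋ : ℝ) + 1 - ⌈x⌉) 0 := by rw [Int.ofNat_toNat]; push_cast; rfl
    _ ≤ y - x + 1 := max_le (by linarith [Int.floor_le y, Int.le_ceil x]) (by linarith)

theorem floor_mul_two_pow_div (x : ℝ) {i j : ℕ} (hj : j ≤ i) :
    ⌊x * 2 ^ i⌋₊ / 2 ^ (i - j) = ⌊x * 2 ^ j⌋₊ := by
  rw [← Nat.floor_div_natCast]
  congr 1
  push_cast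
  rw [div_eq_iff (by positivity), mul_assoc, ← pow_add, Nat.add_sub_cancel' hj]

end DyadicAverages

section WeightedTests

theorem computable_dyadic {k : ℕ × ℕ → ℕ} (hk : Computable k) :
    Computable fun x : ℕ × ℕ => (k x : ℚ) / 2 ^ x.1 :=
  (computable_rat_mul (computable_rat_natCast hk)
    (computable_rat_pow (1 / 2) Computable.fst)).of_eq fun x => by
      rw [div_pow, one_pow, mul_one_div]

/-- A Solovay test in which the `j`-th interval `[l j, r j]` carries a multiplicity `weight j`;
the weighted lengths, rather than the lengths, are summable. -/
structure WeightedTest where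
  l : ℕ → ℚ
  r : ℕ → ℚ
  weight : ℕ → ℕ
  comp_l : Computable l
  comp_r : Computable r
  comp_weight : Computable weight
  nonneg : ∀ j, 0 ≤ l j
  le : ∀ j, l j ≤ r j
  summable : Summable fun j => (weight j : ℝ) * (r j - l j)

/-- `W.UnboundedlyCovers γ`: for every `n`, infinitely many intervals of weight at least `n`
contain `γ`. -/
def WeightedTest.UnboundedlyCovers (W : WeightedTest) (γ : ℝ) : Prop :=
  ∀ n, ∃ᶠ j in atTop, γ ∈ Set.Icc (W.l j : ℝ) (W.r j) ∧ n ≤ W.weight j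

namespace SolovayTest

variable (T : SolovayTest)

/-- The dyadic cell `[k / 2 ^ i, (k + 1) / 2 ^ i]` of the unit interval meets the `i`-th interval
of the test. Each interval is compared only with the cells of its own level. -/
def MeetsCell (i k : ℕ) : Prop :=
  k < 2 ^ i ∧ T.l i ≤ (k + 1) / 2 ^ i ∧ (k / 2 ^ i : ℚ) ≤ T.r i

instance : DecidableRel T.MeetsCell := fun _ _ => inferInstanceAs (Decidable (_ ∧ _))

/-- The number of levels `j < n` at which the cell containing the `k`-th cell of level `i`
meets the `j`-th interval of the test; `k / 2 ^ (i - j)` is the index of that cell. -/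
def visits (i k n : ℕ) : ℕ :=
  Nat.count (fun j => T.MeetsCell j (k / 2 ^ (i - j))) n

/-- The weight given to the `k`-th cell of level `i`: the increment at that level of `⌊√v⌋ ^ 2`
as a function of the number `v` of visits. Since `⌊√v⌋ ^ 2 ≤ v`, the weights along a branch sum to
at most the number of visits, while the increments at squares are unbounded. -/
def cellWeight (i k : ℕ) : ℕ :=
  Nat.sqrt (T.visits i k (i + 1)) ^ 2 - Nat.sqrt (T.visits i k i) ^ 2

theorem computablePred_meetsCell : ComputablePred fun x : ℕ × ℕ => T.MeetsCell x.1 x.2 := by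
  have hindex : ComputablePred fun x : ℕ × ℕ => x.2 < 2 ^ x.1 :=
    computablePred_comp Primrec.nat_lt.computablePred
      (Computable.snd.pair (computable_two_pow.comp Computable.fst))
  refine (computablePred_and hindex (computablePred_and
    (computablePred_rat_le (T.comp_l.comp Computable.fst)
      (computable_dyadic (Computable.succ.comp Computable.snd)))
    (computablePred_rat_le (computable_dyadic Computable.snd)
      (T.comp_r.comp Computable.fst)))).of_eq fun x => ?_
  simp only [MeetsCell, Nat.succ_eq_add_one, Nat.cast_succ]

theorem computable_visits {n : ℕ × ℕ → ℕ} (hn : Computable n) :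
    Computable fun x : ℕ × ℕ => T.visits x.1 x.2 (n x) := by
  have hlevel : Computable fun x : (ℕ × ℕ) × ℕ => x.1.1 - x.2 :=
    Primrec.nat_sub.to_comp.comp (Computable.fst.comp Computable.fst) Computable.snd
  have hcell : Computable fun x : (ℕ × ℕ) × ℕ => x.1.2 / 2 ^ (x.1.1 - x.2) :=
    Primrec.nat_div.to_comp.comp (Computable.snd.comp Computable.fst)
      (computable_two_pow.comp hlevel)
  exact computable_nat_count (p := fun (x : ℕ × ℕ) j => T.MeetsCell j (x.2 / 2 ^ (x.1 - j)))
    (computablePred_comp T.computablePred_meetsCell (Computable.snd.pair hcell)) hn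

theorem computable_cellWeight : Computable fun x : ℕ × ℕ => T.cellWeight x.1 x.2 := by
  have hsq {n : ℕ × ℕ → ℕ} (hn : Computable n) : Computable fun x => Nat.sqrt (n x) ^ 2 :=
    ((Primrec.nat_mul.comp Primrec.nat_sqrt Primrec.nat_sqrt).to_comp.comp hn).of_eq
      fun _ => (sq _).symm
  exact Primrec.nat_sub.to_comp.comp
    (hsq (T.computable_visits (Computable.succ.comp Computable.fst)))
    (hsq (T.computable_visits Computable.fst))

theorem cellWeight_eq_zero {i k : ℕ} (h : ¬ T.MeetsCell i k) : T.cellWeight i k = 0 := by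
  have hvisits : T.visits i k (i + 1) = T.visits i k i := by
    simp [visits, Nat.count_succ, h]
  rw [cellWeight, hvisits, Nat.sub_self]

theorem visits_branch {κ : ℕ → ℕ} {i n : ℕ} (hκ : ∀ j ≤ i, κ i / 2 ^ (i - j) = κ j)
    (hn : n ≤ i + 1) : T.visits i (κ i) n = Nat.count (fun j => T.MeetsCell j (κ j)) n := by
  rw [visits, Nat.count_eq_card_filter_range, Nat.count_eq_card_filter_range]
  refine congrArg Finset.card (Finset.filter_congr fun j hj => ?_)
  rw [hκ j (by have := Finset.mem_range.1 hj; omega)]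

theorem sum_cellWeight_branch {κ : ℕ → ℕ} {I : ℕ}
    (hκ : ∀ i < I, ∀ j ≤ i, κ i / 2 ^ (i - j) = κ j) :
    ∑ i ∈ Finset.range I, T.cellWeight i (κ i) ≤ Nat.count (fun j => T.MeetsCell j (κ j)) I := by
  let V (n : ℕ) : ℕ := Nat.sqrt (Nat.count (fun j => T.MeetsCell j (κ j)) n) ^ 2
  have hV : Monotone V := fun m n hmn =>
    Nat.pow_le_pow_left (Nat.sqrt_le_sqrt (Nat.count_monotone _ hmn)) 2
  calc ∑ i ∈ Finset.range I, T.cellWeight i (κ i)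
      = ∑ i ∈ Finset.range I, (V (i + 1) - V i) := Finset.sum_congr rfl fun i hi => by
        have hi := hκ i (Finset.mem_range.1 hi)
        rw [cellWeight, T.visits_branch hi le_rfl, T.visits_branch hi i.le_succ]
    _ = V I - V 0 := Finset.sum_range_tsub hV I
    _ ≤ V I := Nat.sub_le _ _
    _ ≤ Nat.count (fun j => T.MeetsCell j (κ j)) I := Nat.sqrt_le' _

theorem card_meetsCell_le (i : ℕ) :
    ((Finset.range (2 ^ i)).filter (T.MeetsCell i)).card / 2 ^ i ≤
      (T.r i : ℝ) - T.l i + 2 * (1 / 2) ^ i := by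
  have hpow : (0 : ℝ) < 2 ^ i := by positivity
  have hle : (T.l i : ℝ) ≤ T.r i := by exact_mod_cast T.le i
  have hsub : (Finset.range (2 ^ i)).filter (T.MeetsCell i) ⊆ (Finset.range (2 ^ i)).filter
      fun k : ℕ => (k : ℝ) ∈ Set.Icc ((T.l i : ℝ) * 2 ^ i - 1) (T.r i * 2 ^ i) := by
    refine Finset.monotone_filter_right _ fun k _ ⟨_, hl, hr⟩ => ?_
    rw [le_div_iff₀ (by positivity)] at hl
    rw [div_le_iff₀ (by positivity)] at hr
    constructor
    · rw [sub_le_iff_le_add]; exact_mod_cast hl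
    · exact_mod_cast hr
  have hcard := (Nat.cast_le (α := ℝ)).2 (Finset.card_le_card hsub)
  rw [div_le_iff₀ hpow]
  refine (hcard.trans (card_filter_natCast_mem_Icc_le _ (by nlinarith))).trans_eq ?_
  rw [one_div, inv_pow]
  field_simp
  ring

theorem sum_cellWeight_le (I : ℕ) :
    ∑ i ∈ Finset.range I, (∑ k ∈ Finset.range (2 ^ i), (T.cellWeight i k : ℝ)) / 2 ^ i ≤
      ∑ i ∈ Finset.range I, ((T.r i : ℝ) - T.l i + 2 * (1 / 2) ^ i) := by
  let meets (i k : ℕ) : ℝ := if T.MeetsCell i k then 1 else 0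
  have hbranch (t : ℕ) : ∑ i ∈ Finset.range I, (T.cellWeight i (t / 2 ^ (I - i)) : ℝ) ≤
      ∑ i ∈ Finset.range I, meets i (t / 2 ^ (I - i)) := by
    have hcells (i : ℕ) (hi : i < I) (j : ℕ) (hj : j ≤ i) :
        t / 2 ^ (I - i) / 2 ^ (i - j) = t / 2 ^ (I - j) := by
      rw [Nat.div_div_eq_div_mul, ← pow_add, show I - i + (i - j) = I - j by omega]
    have hsum := T.sum_cellWeight_branch (κ := fun i => t / 2 ^ (I - i)) hcells
    rw [Nat.count_eq_card_filter_range] at hsum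
    simp only [meets, Finset.sum_boole]
    exact_mod_cast hsum
  calc ∑ i ∈ Finset.range I, (∑ k ∈ Finset.range (2 ^ i), (T.cellWeight i k : ℝ)) / 2 ^ i
      = (∑ t ∈ Finset.range (2 ^ I), ∑ i ∈ Finset.range I,
          (T.cellWeight i (t / 2 ^ (I - i)) : ℝ)) / 2 ^ I :=
        sum_dyadic_averages (fun i k => (T.cellWeight i k : ℝ)) I
    _ ≤ (∑ t ∈ Finset.range (2 ^ I), ∑ i ∈ Finset.range I, meets i (t / 2 ^ (I - i))) / 2 ^ I :=
        div_le_div_of_nonneg_right (Finset.sum_le_sum fun t _ => hbranch t) (by positivity)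
    _ = ∑ i ∈ Finset.range I, (∑ k ∈ Finset.range (2 ^ i), meets i k) / 2 ^ i :=
        (sum_dyadic_averages meets I).symm
    _ ≤ ∑ i ∈ Finset.range I, ((T.r i : ℝ) - T.l i + 2 * (1 / 2) ^ i) :=
        Finset.sum_le_sum fun i _ => by
          simp only [meets, Finset.sum_boole]
          exact T.card_meetsCell_le i

theorem summable_cellWeight :
    Summable fun x : ℕ × ℕ => (T.cellWeight x.1 x.2 : ℝ) / 2 ^ x.1 := by
  have hrow (i : ℕ) : HasSum (fun k => (T.cellWeight i k : ℝ) / 2 ^ i)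
      ((∑ k ∈ Finset.range (2 ^ i), (T.cellWeight i k : ℝ)) / 2 ^ i) := by
    rw [Finset.sum_div]
    refine hasSum_sum_of_ne_finset_zero fun k hk => ?_
    rw [T.cellWeight_eq_zero fun h => hk (Finset.mem_range.2 h.1), Nat.cast_zero, zero_div]
  refine (summable_prod_of_nonneg fun _ => by positivity).2 ⟨fun i => (hrow i).summable, ?_⟩
  simp only [(hrow _).tsum_eq]
  have hbound : Summable fun i => (T.r i : ℝ) - T.l i + 2 * (1 / 2) ^ i :=
    T.summable.add (summable_geometric_two.mul_left 2)
  have hnonneg (i : ℕ) : 0 ≤ (T.r i : ℝ) - T.l i + 2 * (1 / 2) ^ i := by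
    have := T.card_meetsCell_le i
    exact le_trans (by positivity) this
  exact summable_of_sum_range_le (fun _ => by positivity) fun I =>
    (T.sum_cellWeight_le I).trans (hbound.sum_le_tsum _ fun i _ => hnonneg i)

/-- The dyadic cells of all levels, weighted by `SolovayTest.cellWeight`; `Nat.pair i k` indexes
the `k`-th cell of level `i`. -/
def weighted : WeightedTest where
  l j := j.unpair.2 / 2 ^ j.unpair.1
  r j := (j.unpair.2 + 1) / 2 ^ j.unpair.1
  weight j := T.cellWeight j.unpair.1 j.unpair.2
  comp_l := (computable_dyadic Computable.snd).comp Computable.unpair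
  comp_r := ((computable_dyadic (Computable.succ.comp Computable.snd)).comp Computable.unpair).of_eq
    fun j => by rw [Nat.succ_eq_add_one, Nat.cast_succ]
  comp_weight := T.computable_cellWeight.comp Computable.unpair
  nonneg j := by positivity
  le j := by gcongr; linarith
  summable := by
    refine (Nat.pairEquiv.symm.summable_iff.2 T.summable_cellWeight).congr fun j => ?_
    simp only [Function.comp_apply, Nat.pairEquiv_symm_apply]
    push_cast
    ring

variable {T} {γ : ℝ}

theorem Covers.frequently_meetsCell (hT : T.Covers γ) (h0 : 0 ≤ γ) (h1 : γ < 1) :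
    ∃ᶠ i in atTop, T.MeetsCell i ⌊γ * 2 ^ i⌋₊ := by
  refine hT.mono fun i hi => ?_
  have hpow : (0 : ℝ) < 2 ^ i := by positivity
  refine ⟨(Nat.floor_lt (by positivity)).2 (by push_cast; nlinarith), ?_, ?_⟩
  · rw [← Rat.cast_le (K := ℝ)]
    push_cast
    exact hi.1.trans ((le_div_iff₀ hpow).2 (Nat.lt_floor_add_one _).le)
  · rw [← Rat.cast_le (K := ℝ)]
    push_cast
    exact ((div_le_iff₀ hpow).2 (Nat.floor_le (by positivity))).trans hi.2

theorem Covers.exists_le_cellWeight (hT : T.Covers γ) (h0 : 0 ≤ γ) (h1 : γ < 1) (n N : ℕ) :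
    ∃ i ≥ N, n ≤ T.cellWeight i ⌊γ * 2 ^ i⌋₊ := by
  let κ (i : ℕ) : ℕ := ⌊γ * 2 ^ i⌋₊
  have hmeets : {j | T.MeetsCell j (κ j)}.Infinite :=
    Nat.frequently_atTop_iff_infinite.1 (hT.frequently_meetsCell h0 h1)
  let M := n + N + 1
  let i := Nat.nth (fun j => T.MeetsCell j (κ j)) (M ^ 2 + 2 * M)
  have hbefore : T.visits i (κ i) i = M ^ 2 + 2 * M := by
    rw [T.visits_branch (fun j hj => floor_mul_two_pow_div γ hj) i.le_succ]
    exact Nat.count_nth_of_infinite hmeets _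
  have hafter : T.visits i (κ i) (i + 1) = (M + 1) ^ 2 := by
    rw [visits, Nat.count_succ, ← visits, hbefore, Nat.sub_self, pow_zero, Nat.div_one,
      if_pos (Nat.nth_mem_of_infinite hmeets _)]
    ring
  have hsqrt : Nat.sqrt (M ^ 2 + 2 * M) = M :=
    (Nat.eq_sqrt'.2 ⟨Nat.le_add_right _ _, by nlinarith⟩).symm
  refine ⟨i, ?_, ?_⟩
  · calc N ≤ M ^ 2 + 2 * M := by dsimp only [M]; omega
      _ ≤ i := Nat.le_nth fun hfin => absurd hfin hmeets
  · rw [cellWeight, hbefore, hafter, hsqrt, Nat.sqrt_eq',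
      show (M + 1) ^ 2 = M ^ 2 + (2 * M + 1) by ring, Nat.add_sub_cancel_left]
    dsimp only [M]
    omega

theorem Covers.unboundedlyCovers_weighted (hT : T.Covers γ) (h0 : 0 ≤ γ) (h1 : γ < 1) :
    T.weighted.UnboundedlyCovers γ := by
  refine fun n => frequently_atTop.2 fun N => ?_
  obtain ⟨i, hi, hweight⟩ := hT.exists_le_cellWeight h0 h1 n N
  have hpow : (0 : ℝ) < 2 ^ i := by positivity
  refine ⟨Nat.pair i ⌊γ * 2 ^ i⌋₊, hi.trans (Nat.left_le_pair _ _), ?_⟩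
  simp only [weighted, Nat.unpair_pair]
  push_cast
  exact ⟨⟨(div_le_iff₀ hpow).2 (Nat.floor_le (by positivity)),
    (le_div_iff₀ hpow).2 (Nat.lt_floor_add_one _).le⟩, hweight⟩

end SolovayTest

end WeightedTests

/-! ### Detours at a covered real -/

section Interleaving

/-- The sequence `x 0, y 0, x 1, y 1, …`. -/
def interleave (x y : ℕ → ℚ) (n : ℕ) : ℚ :=
  if n % 2 = 0 then x (n / 2) else y (n / 2)

theorem interleave_two_mul (x y : ℕ → ℚ) (s : ℕ) : interleave x y (2 * s) = x s := by
  simp [interleave]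

theorem interleave_two_mul_add_one (x y : ℕ → ℚ) (s : ℕ) : interleave x y (2 * s + 1) = y s := by
  rw [interleave, if_neg (by omega), show (2 * s + 1) / 2 = s by omega]

variable {a x y : ℕ → ℚ} {γ : ℝ}

theorem IsDCEApprox.interleave (ha : IsDCEApprox a γ) (hx : Computable x) (hy : Computable y)
    (hx01 : ∀ s, x s ∈ Set.Icc (0 : ℚ) 1) (hy01 : ∀ s, y s ∈ Set.Icc (0 : ℚ) 1)
    (hxa : Summable fun s => |(x s : ℝ) - a s|) (hya : Summable fun s => |(y s : ℝ) - a s|) :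
    IsDCEApprox (interleave x y) γ := by
  have hhalf : IsComputableOrder fun n => n / 2 :=
    ⟨Primrec.nat_div.to_comp.comp Computable.id (Computable.const 2),
      fun _ _ => Nat.div_le_div_right, Nat.tendsto_div_const_atTop two_ne_zero⟩
  have hparity : ComputablePred fun n : ℕ => n % 2 = 0 :=
    (Primrec.eq.comp (Primrec.nat_mod.comp .id (.const 2)) (.const 0)).computablePred
  refine (ha.comp hhalf).of_summable_abs_sub
    (computable_ite hparity (hx.comp hhalf.1) (hy.comp hhalf.1)) (fun n => ?_)
    (HasSum.even_add_odd (m := ∑' s, |(x s : ℝ) - a s|) (m' := ∑' s, |(y s : ℝ) - a s|)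
      ?_ ?_).summable
  · unfold _root_.interleave
    split_ifs
    exacts [hx01 _, hy01 _]
  · simpa only [interleave_two_mul, Nat.mul_div_cancel_left _ two_pos] using hxa.hasSum
  · simpa only [interleave_two_mul_add_one, show ∀ s, (2 * s + 1) / 2 = s by omega] using hya.hasSum

theorem speedLiminf_interleave_le_zero
    (h : ∀ ε > 0, ∃ᶠ s in atTop, |γ - y s| ≤ ε * |γ - x s|) :
    speedLiminf (interleave x y) (fun s => s + 1) γ ≤ 0 := by
  refine le_of_forall_gt_imp_ge_of_dense fun e he => ?_
  obtain ⟨ε, hε0, hεe⟩ := EReal.lt_iff_exists_real_btwn.1 he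
  have hε : 0 < ε := by exact_mod_cast hε0
  have htwo : Tendsto (fun s : ℕ => 2 * s) atTop atTop :=
    tendsto_id.const_mul_atTop' two_pos
  refine (liminf_le_of_frequently_le' (htwo.frequently ((h ε hε).mono fun s hs => ?_))).trans hεe.le
  rw [interleave_two_mul, interleave_two_mul_add_one, EReal.coe_le_coe_iff, abs_div]
  exact div_le_of_le_mul₀ (abs_nonneg _) hε.le hs

end Interleaving

section Detours

namespace WeightedTest

variable (W : WeightedTest) (a : ℕ → ℚ)

/-- The length of the `j`-th interval, counted with its multiplicity. -/
def weightedLength (j : ℕ) : ℚ :=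
  W.weight j * (W.r j - W.l j)

/-- At stage `s` the sequence `a` is tested against the interval of index `s.unpair.1`, so that
every interval is tested at infinitely many stages. The interval fires at the first of its stages
at which it contains `a s`, provided that its weight is positive. -/
def Fires (s : ℕ) : Prop :=
  0 < W.weight s.unpair.1 ∧ a s ∈ Set.Icc (W.l s.unpair.1) (W.r s.unpair.1) ∧
    ∀ t < s, ¬ (t.unpair.1 = s.unpair.1 ∧ a t ∈ Set.Icc (W.l s.unpair.1) (W.r s.unpair.1))

instance : DecidablePred (W.Fires a) :=
  fun _ => inferInstanceAs (Decidable (_ ∧ (_ ∧ _) ∧ ∀ _, _ → ¬ (_ ∧ _ ∧ _)))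

/-- The sequence `a`, replaced at the stages where an interval fires by its left endpoint. -/
def near (s : ℕ) : ℚ :=
  if W.Fires a s then W.l s.unpair.1 else a s

/-- The sequence `a`, replaced at the stages where an interval fires by the point that lies to the
left of the interval at the distance of its weighted length, cut off at `0`. -/
def far (s : ℕ) : ℚ :=
  if W.Fires a s then max 0 (W.l s.unpair.1 - W.weightedLength s.unpair.1) else a s

theorem summable_weightedLength : Summable fun j => (W.weightedLength j : ℝ) := by
  simpa [weightedLength] using W.summable

variable {a}

theorem computablePred_fires (ha : Computable a) : ComputablePred (W.Fires a) := by
  have hindex : Computable fun s : ℕ => s.unpair.1 := Computable.fst.comp Computable.unpair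
  have hmem {α : Type} [Primcodable α] {t j : α → ℕ} (ht : Computable t) (hj : Computable j) :
      ComputablePred fun x => a (t x) ∈ Set.Icc (W.l (j x)) (W.r (j x)) :=
    computablePred_and (computablePred_rat_le (W.comp_l.comp hj) (ha.comp ht))
      (computablePred_rat_le (ha.comp ht) (W.comp_r.comp hj))
  have hpos : ComputablePred fun s : ℕ => 0 < W.weight s.unpair.1 :=
    computablePred_comp (p := fun x : ℕ × ℕ => x.1 < x.2) Primrec.nat_lt.computablePred
      ((Computable.const 0).pair (W.comp_weight.comp hindex))
  have hsame : ComputablePred fun x : ℕ × ℕ => x.2.unpair.1 = x.1.unpair.1 :=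
    computablePred_comp (p := fun x : ℕ × ℕ => x.1 = x.2) Primrec.eq.computablePred
      ((hindex.comp Computable.snd).pair (hindex.comp Computable.fst))
  have hearlier := computablePred_forall_lt
    (p := fun s t => ¬ (t.unpair.1 = s.unpair.1 ∧
      a t ∈ Set.Icc (W.l s.unpair.1) (W.r s.unpair.1)))
    (computablePred_and hsame (hmem Computable.snd (hindex.comp Computable.fst))).not
    Computable.id
  exact computablePred_and hpos (computablePred_and (hmem Computable.id hindex) hearlier)

theorem computable_near (ha : Computable a) : Computable (W.near a) :=
  computable_ite (W.computablePred_fires ha)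
    (W.comp_l.comp (Computable.fst.comp Computable.unpair)) ha

theorem computable_far (ha : Computable a) : Computable (W.far a) := by
  have hshift : Computable fun j => max 0 (W.l j - W.weightedLength j) :=
    computable_rat_max (Computable.const 0) (computable_rat_sub W.comp_l
      (computable_rat_mul (computable_rat_natCast W.comp_weight)
        (computable_rat_sub W.comp_r W.comp_l)))
  exact computable_ite (W.computablePred_fires ha)
    (hshift.comp (Computable.fst.comp Computable.unpair)) ha

variable {W}

theorem Fires.eq_of_unpair_fst_eq {s t : ℕ} (hs : W.Fires a s) (ht : W.Fires a t)
    (h : s.unpair.1 = t.unpair.1) : s = t := by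
  rcases lt_trichotomy s t with hlt | heq | hlt
  · exact absurd ⟨h, h ▸ hs.2.1⟩ (ht.2.2 s hlt)
  · exact heq
  · exact absurd ⟨h.symm, h ▸ ht.2.1⟩ (hs.2.2 t hlt)

theorem Fires.near_eq {s : ℕ} (hs : W.Fires a s) : W.near a s = W.l s.unpair.1 :=
  if_pos hs

theorem Fires.far_eq {s : ℕ} (hs : W.Fires a s) :
    W.far a s = max 0 (W.l s.unpair.1 - W.weightedLength s.unpair.1) :=
  if_pos hs

theorem Fires.length_le {s : ℕ} (hs : W.Fires a s) :
    W.r s.unpair.1 - W.l s.unpair.1 ≤ W.weightedLength s.unpair.1 :=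
  le_mul_of_one_le_left (sub_nonneg.2 (W.le _)) (by exact_mod_cast hs.1)

theorem Fires.abs_near_sub_le {s : ℕ} (hs : W.Fires a s) :
    |W.near a s - a s| ≤ W.weightedLength s.unpair.1 := by
  rw [hs.near_eq, abs_le]
  have hlen := hs.length_le
  obtain ⟨-, ⟨hla, har⟩, -⟩ := hs
  constructor <;> linarith [W.le s.unpair.1]

theorem Fires.abs_far_sub_le {s : ℕ} (hs : W.Fires a s) :
    |W.far a s - a s| ≤ 2 * W.weightedLength s.unpair.1 := by
  rw [hs.far_eq, abs_le]
  have hlen := hs.length_le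
  have hle := W.le s.unpair.1
  obtain ⟨-, ⟨hla, har⟩, -⟩ := hs
  constructor
  · linarith [le_max_right 0 (W.l s.unpair.1 - W.weightedLength s.unpair.1)]
  · have hmax : max 0 (W.l s.unpair.1 - W.weightedLength s.unpair.1) ≤ W.l s.unpair.1 :=
      max_le (W.nonneg _) (by linarith)
    linarith

variable (W a)

theorem summable_indicator_fires :
    Summable ({s | W.Fires a s}.indicator fun s => (W.weightedLength s.unpair.1 : ℝ)) := by
  rw [← summable_subtype_iff_indicator]
  exact W.summable_weightedLength.comp_injective
    (i := fun s : {s | W.Fires a s} => s.1.unpair.1)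
    fun s t h => Subtype.ext (Fires.eq_of_unpair_fst_eq s.2 t.2 h)

theorem summable_abs_near_sub : Summable fun s => |(W.near a s : ℝ) - a s| := by
  refine .of_nonneg_of_le (fun _ => abs_nonneg _) (fun s => ?_) (W.summable_indicator_fires a)
  by_cases hs : W.Fires a s
  · rw [Set.indicator_of_mem (Set.mem_ofPred.2 hs)]
    exact_mod_cast hs.abs_near_sub_le
  · rw [Set.indicator_of_notMem (Set.mem_ofPred.not.2 hs), near, if_neg hs, sub_self, abs_zero]

theorem summable_abs_far_sub : Summable fun s => |(W.far a s : ℝ) - a s| := by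
  refine .of_nonneg_of_le (fun _ => abs_nonneg _) (fun s => ?_)
    ((W.summable_indicator_fires a).mul_left 2)
  by_cases hs : W.Fires a s
  · rw [Set.indicator_of_mem (Set.mem_ofPred.2 hs)]
    exact_mod_cast hs.abs_far_sub_le
  · rw [Set.indicator_of_notMem (Set.mem_ofPred.not.2 hs), mul_zero, far, if_neg hs, sub_self,
      abs_zero]

variable {W a}

theorem near_mem_Icc (ha : ∀ s, a s ∈ Set.Icc (0 : ℚ) 1) (s : ℕ) :
    W.near a s ∈ Set.Icc (0 : ℚ) 1 := by
  by_cases hs : W.Fires a s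
  · rw [hs.near_eq]
    exact ⟨W.nonneg _, hs.2.1.1.trans (ha s).2⟩
  · rw [near, if_neg hs]
    exact ha s

theorem far_mem_Icc (ha : ∀ s, a s ∈ Set.Icc (0 : ℚ) 1) (s : ℕ) :
    W.far a s ∈ Set.Icc (0 : ℚ) 1 := by
  by_cases hs : W.Fires a s
  · rw [hs.far_eq]
    exact ⟨le_max_left _ _, max_le zero_le_one
      (by linarith [hs.length_le, W.le s.unpair.1, hs.2.1.1, (ha s).2])⟩
  · rw [far, if_neg hs]
    exact ha s

variable {γ : ℝ}

theorem exists_fires (ha : Tendsto (fun s => (a s : ℝ)) atTop (nhds γ)) {j : ℕ}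
    (hj : 0 < W.weight j) (hγ : γ ∈ Set.Ioo (W.l j : ℝ) (W.r j)) :
    ∃ s, W.Fires a s ∧ s.unpair.1 = j := by
  have hpair : Tendsto (Nat.pair j) atTop atTop :=
    tendsto_atTop_mono (Nat.right_le_pair j) tendsto_id
  obtain ⟨t, ht⟩ := (hpair.eventually (ha.eventually_mem (Ioo_mem_nhds hγ.1 hγ.2))).exists
  have hex : ∃ s, s.unpair.1 = j ∧ a s ∈ Set.Icc (W.l j) (W.r j) :=
    ⟨Nat.pair j t, by rw [Nat.unpair_pair], by exact_mod_cast ht.1.le, by exact_mod_cast ht.2.le⟩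
  obtain ⟨hs, hmem⟩ := Nat.find_spec hex
  refine ⟨Nat.find hex, ?_, hs⟩
  rw [Fires, hs]
  exact ⟨hj, hmem, fun t ht => Nat.find_min hex ht⟩

theorem UnboundedlyCovers.frequently_abs_sub_near_le (hW : W.UnboundedlyCovers γ)
    (ha : Tendsto (fun s => (a s : ℝ)) atTop (nhds γ)) (hγ : 0 < γ)
    (hirr : Irrational γ) {ε : ℝ} (hε : 0 < ε) :
    ∃ᶠ s in atTop, |γ - W.near a s| ≤ ε * |γ - W.far a s| := by
  refine frequently_atTop.2 fun N => ?_
  obtain ⟨m, hm⟩ := exists_nat_gt (1 / ε)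
  have hm0 : 0 < m := by exact_mod_cast (one_div_pos.2 hε).trans hm
  have hsmall : ∀ᶠ j in atTop, (W.weightedLength j : ℝ) ≤ γ :=
    W.summable_weightedLength.tendsto_atTop_zero.eventually_le_const hγ
  obtain ⟨j, ⟨⟨hlγ, hγr⟩, hweight⟩, hdist, hj⟩ :=
    ((hW m).and_eventually (hsmall.and (eventually_ge_atTop N))).exists
  obtain ⟨s, hs, rfl⟩ := exists_fires ha (hm0.trans_le hweight)
    ⟨hlγ.lt_of_ne (hirr.ne_rat _).symm, hγr.lt_of_ne (hirr.ne_rat _)⟩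
  refine ⟨s, hj.trans (Nat.unpair_left_le s), ?_⟩
  have hfar : (W.far a s : ℝ) ≤ γ - W.weightedLength s.unpair.1 := by
    rw [hs.far_eq]
    push_cast
    exact max_le (sub_nonneg.2 hdist) (sub_le_sub_right hlγ _)
  have hone : 1 ≤ ε * W.weight s.unpair.1 := by
    rw [← div_le_iff₀' hε]
    exact hm.le.trans (by exact_mod_cast hweight)
  calc |γ - W.near a s| = γ - W.l s.unpair.1 := by
        rw [hs.near_eq, abs_of_nonneg (sub_nonneg.2 hlγ)]
    _ ≤ W.r s.unpair.1 - W.l s.unpair.1 := sub_le_sub_right hγr _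
    _ ≤ ε * W.weight s.unpair.1 * (W.r s.unpair.1 - W.l s.unpair.1) :=
        le_mul_of_one_le_left (by linarith) hone
    _ = ε * W.weightedLength s.unpair.1 := by rw [weightedLength]; push_cast; ring
    _ ≤ ε * (γ - W.far a s) := by gcongr; linarith
    _ ≤ ε * |γ - W.far a s| := by gcongr; exact le_abs_self _

theorem UnboundedlyCovers.stronglyDCEZeroSpeedable (hW : W.UnboundedlyCovers γ)
    (ha : IsDCEApprox a γ) (hγ : 0 < γ) (hirr : Irrational γ) : StronglyDCEZeroSpeedable γ :=
  ⟨interleave (W.far a) (W.near a),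
    ha.interleave (W.computable_far ha.1.1) (W.computable_near ha.1.1)
      (far_mem_Icc ha.1.2.1) (near_mem_Icc ha.1.2.1)
      (W.summable_abs_far_sub a) (W.summable_abs_near_sub a),
    .inr (speedLiminf_interleave_le_zero fun _ => hW.frequently_abs_sub_near_le ha.1.2.2 hγ hirr)⟩

end WeightedTest

theorem SolovayTest.Covers.stronglyDCEZeroSpeedable {T : SolovayTest} {a : ℕ → ℚ} {γ : ℝ}
    (hT : T.Covers γ) (ha : IsDCEApprox a γ) (hγ : γ ∈ Set.Ioo (0 : ℝ) 1) :
    StronglyDCEZeroSpeedable γ := by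
  by_cases hirr : Irrational γ
  · exact (hT.unboundedlyCovers_weighted hγ.1.le hγ.2).stronglyDCEZeroSpeedable ha hγ.1 hirr
  · exact ⟨a, ha, .inl (exists_rat_of_not_irrational hirr)⟩

end Detours

theorem dce_speedability_tfae (γ : ℝ) (hγ : γ ∈ Set.Ioo (0 : ℝ) 1)
    (hdce : ∃ a : ℕ → ℚ, IsDCEApprox a γ) :
    List.TFAE
      [StronglyDCEZeroSpeedable γ,
       DCESpeedable γ,
       WeaklyDCESpeedable γ,
       ∃ T : SolovayTest, T.Covers γ] := by
  obtain ⟨a, ha⟩ := hdce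
  tfae_have 1 → 2 := StronglyDCEZeroSpeedable.dceSpeedable
  tfae_have 2 → 3 := DCESpeedable.weaklyDCESpeedable
  tfae_have 3 → 4 := WeaklyDCESpeedable.exists_covers
  tfae_have 4 → 1 := fun ⟨_, hT⟩ => hT.stronglyDCEZeroSpeedable ha hγ
  tfae_finish
end

section
/- Let a ≤ b be real numbers, let m ≥ 1 be a natural number, and let z_0, …, z_m and d_0, …, d_m be real numbers with associated intervals I_i = [z_i − d_i, z_i + d_i]. If d_i ≥ (b − a)/m for every 0 ≤ i ≤ m, and z_j ∉ I_i for all 0 ≤ i < j ≤ m, then there exists i ∈ {0, …, m} such that z_i ∉ [a, b]. -/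
/-!
Let `δ` be the smallest of `d 0, …, d (m - 1)`. The interval `[a, b]` is covered by `m` intervals of
length `δ` laid end to end from `a`. If `m + 1` points lay in `[a, b]`, two of them would share one
of these intervals, and the later would lie within `δ` of the earlier.
-/

theorem exists_lt_mem_Icc_succ {α : Type*} [LinearOrder α] {u : ℕ → α} {x : α} {m : ℕ}
    (hm : m ≠ 0) (hx : x ∈ Set.Icc (u 0) (u m)) : ∃ k < m, x ∈ Set.Icc (u k) (u (k + 1)) := by
  induction m with
  | zero => contradiction
  | succ m ih =>
    rcases le_or_gt (u m) x with hmx | hxm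
    · exact ⟨m, m.lt_succ_self, hmx, hx.2⟩
    · have hm' : m ≠ 0 := by
        rintro rfl
        exact hxm.not_ge hx.1
      obtain ⟨k, hkm, hxk⟩ := ih hm' ⟨hx.1, hxm.le⟩
      exact ⟨k, hkm.trans m.lt_succ_self, hxk⟩

section OrderedGroup

variable {G : Type*} [AddCommGroup G] [LinearOrder G] [IsOrderedAddMonoid G]

theorem exists_ne_abs_sub_le_of_card_lt {ι : Type*} {s : Finset ι} {x : ι → G} {a b δ : G} {m : ℕ}
    (hm : m ≠ 0) (hcard : m < s.card) (hx : ∀ i ∈ s, x i ∈ Set.Icc a b) (hδ : b - a ≤ m • δ) :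
    ∃ i ∈ s, ∃ j ∈ s, i ≠ j ∧ |x i - x j| ≤ δ := by
  have hcell : ∀ i ∈ s, ∃ k < m, x i ∈ Set.Icc (a + k • δ) (a + (k + 1) • δ) := fun i hi ↦
    exists_lt_mem_Icc_succ (u := fun k ↦ a + k • δ) hm
      ⟨by simpa using (hx i hi).1, (hx i hi).2.trans (sub_le_iff_le_add'.1 hδ)⟩
  choose! cell hcell_lt hcell_mem using hcell
  obtain ⟨i, hi, j, hj, hij, hsame⟩ := Finset.exists_ne_map_eq_of_card_lt_of_maps_to
    (t := Finset.range m) (by simpa using hcard)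
    (fun i hi ↦ Finset.mem_coe.2 (Finset.mem_range.2 (hcell_lt i hi)))
  have hj_mem := hcell_mem j hj
  rw [← hsame] at hj_mem
  refine ⟨i, hi, j, hj, hij, ?_⟩
  calc |x i - x j| ≤ (a + (cell i + 1) • δ) - (a + cell i • δ) :=
        abs_sub_le_of_le_of_le (hcell_mem i hi).1 (hcell_mem i hi).2 hj_mem.1 hj_mem.2
    _ = δ := by rw [succ_nsmul]; abel

theorem interval_escape_general {a b : G} {m : ℕ} (hm : m ≠ 0) {z d : ℕ → G}
    (hd : ∀ i < m, b - a ≤ m • d i)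
    (hz : ∀ i j, i < j → j ≤ m → z j ∉ Set.Icc (z i - d i) (z i + d i)) :
    ∃ i ≤ m, z i ∉ Set.Icc a b := by
  by_contra! hmem
  obtain ⟨i₀, hi₀, hmin⟩ := (Finset.range m).exists_min_image d (Finset.nonempty_range_iff.2 hm)
  obtain ⟨i, hi, j, hj, hij, hdist⟩ : ∃ i ∈ Finset.range (m + 1), ∃ j ∈ Finset.range (m + 1),
      i ≠ j ∧ |z i - z j| ≤ d i₀ :=
    exists_ne_abs_sub_le_of_card_lt hm (by simp)
      (fun i hi ↦ hmem i (Finset.mem_range_succ_iff.1 hi)) (hd i₀ (Finset.mem_range.1 hi₀))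
  rw [Finset.mem_range_succ_iff] at hi hj
  wlog hlt : i < j generalizing i j
  · exact this j hj i hi hij.symm (abs_sub_comm (z i) (z j) ▸ hdist) (by lia)
  have hdi : d i₀ ≤ d i := hmin i (Finset.mem_range.2 (hlt.trans_le hj))
  exact hz i j hlt hj (Set.mem_Icc_iff_abs_le.1 (hdist.trans hdi))

end OrderedGroup

theorem interval_escape (a b : ℝ) (hab : a ≤ b) (m : ℕ) (hm : 1 ≤ m)
    (z d : ℕ → ℝ)
    (hd : ∀ i, i ≤ m → (b - a) / (m : ℝ) ≤ d i)
    (hz : ∀ i j, i < j → j ≤ m → z j ∉ Set.Icc (z i - d i) (z i + d i)) :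
    ∃ i, i ≤ m ∧ z i ∉ Set.Icc a b := by
  refine interval_escape_general (Nat.one_le_iff_ne_zero.1 hm) (fun i hi ↦ ?_) hz
  rw [nsmul_eq_mul, ← div_le_iff₀' (by positivity)]
  exact hd i hi.le
end
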